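/- With Apéry's sequences B_n, A_n for ζ(2) and the coefficients a_{ν,μ} of the polynomials p_ν, one has ∑_{n=0}^∞ (B_n·ζ(2) − A_n) = 1 + ∑_{ν=1}^∞ ∑_{μ=0}^{2ν} a_{ν,μ} / ( (ν+1)(μ+1) ). -/

import Mathlib

open Finset Polynomial Real

/-- Apéry's denominators for `ζ(2)`: `Bₙ = ∑_{k=0}^n C(n,k)² C(n+k,k)`. -/
noncomputable def aperyB2 (n : ℕ) : ℝ :=
  ∑ k ∈ range (n + 1), (Nat.choose n k : ℝ) ^ 2 * (Nat.choose (n + k) k : ℝ)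

/-- Apéry's numerators for `ζ(2)`:
`Aₙ = ∑_{k=0}^n C(n,k)² C(n+k,k) (2 ∑_{m=1}^n (−1)^{m−1}/m²
  + ∑_{m=1}^k (−1)^{n+m−1}/(m² C(n,m) C(n+m,m)))`. -/
noncomputable def aperyA2 (n : ℕ) : ℝ :=
  ∑ k ∈ range (n + 1), (Nat.choose n k : ℝ) ^ 2 * (Nat.choose (n + k) k : ℝ) *
    (2 * (∑ m ∈ Icc 1 n, (-1 : ℝ) ^ (m - 1) / (m : ℝ) ^ 2)
      + ∑ m ∈ Icc 1 k,
          (-1 : ℝ) ^ (n + m - 1) /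
            ((m : ℝ) ^ 2 * (Nat.choose n m : ℝ) * (Nat.choose (n + m) m : ℝ)))

/-- The polynomials `p₁(t) = t²`, `p₂(t) = t⁴ − t² + t`,
`p_ν(t) = t² p_{ν−1}(t) + t(1−t) p_{ν−2}(t)` for `ν ≥ 3` (with `p₀ := 0`, unused). -/
noncomputable def pzeta : ℕ → Polynomial ℝ
  | 0 => 0
  | 1 => X ^ 2
  | 2 => X ^ 4 - X ^ 2 + X
  | (n + 3) => X ^ 2 * pzeta (n + 2) + X * (1 - X) * pzeta (n + 1)

/-- `a_{ν,μ}`, the coefficient of `t^μ` in `p_ν(t)`. -/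
noncomputable def azeta (ν μ : ℕ) : ℝ := (pzeta ν).coeff μ

/-!
Both `Bₙ ζ(2) - Aₙ` and `(-1)ⁿ ∑ₜ C(t,n) (n! t!/(n+t+1)!)²` satisfy Apéry's recurrence, by creative
telescoping in `k` and in `t` with the same certificate, and they agree for `n = 0` and `n = 1`.

For fixed `t`, the identity `x + y - xy = 1 - (1-x)(1-y)` and Euler's Beta integral show that the
terms of these series add up over `n` to the integral of `(xy(x+y-xy))^t` over the unit square.
Writing instead `x + y - xy = y + x(1-y)` and integrating with respect to `x` splits that integral
into the nonnegative numbers `C(t,j)/(t+j+1) ∫₀¹ (y²)^(t-j) (y(1-y))^j dy`, which may be regrouped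
according to `ν = t + j`. The sum of `C(t,j) (y²)^(t-j) (y(1-y))^j` over `t + j = ν` satisfies the
recurrence of the polynomials `p_ν`, as for Fibonacci numbers and the shallow diagonals of Pascal's
triangle; its value `1` at `ν = 0` continues their sequence backwards and is the constant term of
the formula.
-/

open Filter Topology

/-! ### Apéry's recurrence for the binomial sums -/

section Binomial

variable {K : Type*} [Field K] [CharZero K]

lemma cast_choose_succ_right (n k : ℕ) :
    (n.choose (k + 1) : K) = (n - k) / (k + 1) * n.choose k := by
  have h : (n.choose (k + 1) : K) * (k + 1) = n.choose k * (n - k) := by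
    rcases le_or_gt k n with hk | hk
    · exact_mod_cast congrArg (Nat.cast (R := K)) (n.choose_succ_right_eq k)
    · simp [Nat.choose_eq_zero_of_lt hk, Nat.choose_eq_zero_of_lt (Nat.lt_succ_of_lt hk)]
  have hk : (k : K) + 1 ≠ 0 := k.cast_add_one_ne_zero
  field_simp
  linear_combination h

lemma cast_choose_succ_succ (n k : ℕ) :
    ((n + 1).choose (k + 1) : K) = (n + 1) / (k + 1) * n.choose k := by
  have h : ((n : K) + 1) * n.choose k = (n + 1).choose (k + 1) * (k + 1) :=
    mod_cast n.add_one_mul_choose_eq k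
  have hk : (k : K) + 1 ≠ 0 := k.cast_add_one_ne_zero
  field_simp
  linear_combination -h

lemma cast_choose_eq_mul_choose_succ_left (n k : ℕ) :
    (n.choose k : K) = (n + 1 - k) / (n + 1) * (n + 1).choose k := by
  have hk : (k : K) + 1 ≠ 0 := k.cast_add_one_ne_zero
  have hn : (n : K) + 1 ≠ 0 := n.cast_add_one_ne_zero
  have h : (n.choose k : K) * ((n + 1) / (k + 1)) =
      (((n + 1 : ℕ) : K) - k) / (k + 1) * (n + 1).choose k := by
    rw [← cast_choose_succ_right, cast_choose_succ_succ, mul_comm]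
  push_cast at h
  field_simp at h ⊢
  exact h

end Binomial

/-- The second-order difference operator of Apéry's recurrence for `ζ(2)`,
`(n+2)² u_{n+2} = (11(n+1)² + 11(n+1) + 3) u_{n+1} + (n+1)² u_n`. -/
def aperyOperator (u : ℕ → ℝ) (n : ℕ) : ℝ :=
  ((n : ℝ) + 2) ^ 2 * u (n + 2) - (11 * ((n : ℝ) + 1) ^ 2 + 11 * ((n : ℝ) + 1) + 3) * u (n + 1)
    - ((n : ℝ) + 1) ^ 2 * u n

lemma eq_of_aperyOperator_eq_zero {u v : ℕ → ℝ} (hu : ∀ n, aperyOperator u n = 0)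
    (hv : ∀ n, aperyOperator v n = 0) (h₀ : u 0 = v 0) (h₁ : u 1 = v 1) : u = v := by
  funext n
  induction n using Nat.twoStepInduction with
  | zero => exact h₀
  | one => exact h₁
  | more n ih₀ ih₁ =>
    have hn : ((n : ℝ) + 2) ^ 2 ≠ 0 := by positivity
    have h := (hu n).trans (hv n).symm
    simp only [aperyOperator, ih₀, ih₁] at h
    exact mul_left_cancel₀ hn (by linear_combination h)

lemma aperyOperator_sum {ι : Type*} (s : Finset ι) (f : ℕ → ι → ℝ) (n : ℕ) :
    aperyOperator (fun m => ∑ i ∈ s, f m i) n = ∑ i ∈ s, aperyOperator (fun m => f m i) n := by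
  simp only [aperyOperator, Finset.mul_sum, Finset.sum_sub_distrib]

lemma hasSum_aperyOperator {ι : Type*} {f : ℕ → ι → ℝ} (hf : ∀ m, Summable (f m)) (n : ℕ) :
    HasSum (fun i => aperyOperator (fun m => f m i) n)
      (aperyOperator (fun m => ∑' i, f m i) n) :=
  (((hf (n + 2)).hasSum.mul_left _).sub ((hf (n + 1)).hasSum.mul_left _)).sub
    ((hf n).hasSum.mul_left _)

/-- The polynomial in `x` of Zeilberger's certificate for Apéry's recurrence, with the index `n`
of the recurrence replaced by a real number `a`. The same polynomial serves both solutions: at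
`x = k` for the binomial sums, and at `x = -(t + 1)` for the series remainders, because the binomial
weights are the double-pole coefficients at `x = k` of the rational function of `x` whose values at
`x = -(t + 1)` are the terms of those series. -/
def aperyCertificate (a x : ℝ) : ℝ :=
  x ^ 2 + 3 * (2 * a + 3) * x - 11 * (a + 1) ^ 2 - 9 * (a + 1) - 2

/-- The summand `C(n,k)² C(n+k,k)` of `Bₙ`. -/
def aperyWeight (n k : ℕ) : ℝ := (n.choose k : ℝ) ^ 2 * ((n + k).choose k : ℝ)

/-- Apéry's approximation `c_{n,k}` to `ζ(2)`, whose average with the weights `C(n,k)² C(n+k,k)`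
is `Aₙ / Bₙ`. Since `x / 0 = 0`, the terms `m > n` vanish, so `c_{n,k} = c_{n,n}` for `k > n`. -/
noncomputable def aperyApprox (n k : ℕ) : ℝ :=
  2 * (∑ m ∈ Icc 1 n, (-1 : ℝ) ^ (m - 1) / (m : ℝ) ^ 2)
    + ∑ m ∈ Icc 1 k,
        (-1 : ℝ) ^ (n + m - 1) / ((m : ℝ) ^ 2 * (n.choose m : ℝ) * ((n + m).choose m : ℝ))

lemma aperyWeight_eq_zero_of_lt {n k : ℕ} (h : n < k) : aperyWeight n k = 0 := by
  simp [aperyWeight, Nat.choose_eq_zero_of_lt h]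

lemma aperyWeight_succ_right (n k : ℕ) :
    aperyWeight n (k + 1) = (n - k) ^ 2 * (n + k + 1) / (k + 1) ^ 3 * aperyWeight n k := by
  rw [aperyWeight, aperyWeight, ← add_assoc, cast_choose_succ_right, cast_choose_succ_succ]
  push_cast
  field_simp

lemma aperyWeight_eq_mul_succ_left (n k : ℕ) :
    aperyWeight n k = (n + 1 - k) ^ 2 / ((n + 1) * (n + k + 1)) * aperyWeight (n + 1) k := by
  rw [aperyWeight, aperyWeight, cast_choose_eq_mul_choose_succ_left n,
    cast_choose_eq_mul_choose_succ_left (n + k), add_right_comm n 1 k]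
  push_cast
  field_simp
  ring

lemma aperyWeight_succ_succ (n k : ℕ) :
    aperyWeight (n + 1) (k + 1) =
      (n + 1) * (n + k + 1) * (n + k + 2) / (k + 1) ^ 3 * aperyWeight n k := by
  rw [aperyWeight, aperyWeight, cast_choose_succ_succ, show n + 1 + (k + 1) = n + k + 1 + 1 by ring,
    cast_choose_succ_succ, cast_choose_eq_mul_choose_succ_left (n + k)]
  push_cast
  field_simp
  ring

lemma aperyWeight_mul_aperyApprox_succ_right_sub (n k : ℕ) :
    aperyWeight n (k + 1) * (aperyApprox n (k + 1) - aperyApprox n k) =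
      (-1) ^ (n + k) * n.choose (k + 1) / (k + 1) ^ 2 := by
  have hstep : aperyApprox n (k + 1) - aperyApprox n k =
      (-1) ^ (n + k) / (((k : ℝ) + 1) ^ 2 * n.choose (k + 1) * (n + (k + 1)).choose (k + 1)) := by
    rw [aperyApprox, aperyApprox, Finset.sum_Icc_succ_top (Nat.succ_le_succ k.zero_le),
      ← add_assoc n, Nat.add_sub_cancel]
    push_cast
    ring
  rw [hstep, aperyWeight]
  rcases eq_or_ne (n.choose (k + 1) : ℝ) 0 with h | h
  · simp [h]
  have h' : ((n + (k + 1)).choose (k + 1) : ℝ) ≠ 0 :=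
    mod_cast (Nat.choose_pos (Nat.le_add_left _ _)).ne'
  field_simp

lemma aperyWeight_mul_aperyApprox_succ_left_sub (n k : ℕ) :
    aperyWeight n k * (aperyApprox (n + 1) k - aperyApprox n k) =
      2 * (-1) ^ (n + k) * n.choose k / ((n + 1) * (n + k + 1)) := by
  induction k with
  | zero =>
    simp only [aperyWeight, aperyApprox, Finset.sum_Icc_succ_top (Nat.le_add_left 1 n),
      Nat.add_sub_cancel, Nat.choose_zero_right, Finset.Icc_eq_empty_of_lt zero_lt_one,
      Finset.sum_empty]
    push_cast
    field_simp
    ring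
  | succ k ih =>
    have hright := aperyWeight_mul_aperyApprox_succ_right_sub n k
    have hright' := aperyWeight_mul_aperyApprox_succ_right_sub (n + 1) k
    have hw := aperyWeight_succ_right n k
    have hw' := aperyWeight_eq_mul_succ_left n (k + 1)
    have hc := cast_choose_succ_right (K := ℝ) n k
    have hc' := cast_choose_succ_succ (K := ℝ) n k
    rw [hc'] at hright'
    rw [hc] at hright ⊢
    push_cast at hw' ⊢
    calc aperyWeight n (k + 1) * (aperyApprox (n + 1) (k + 1) - aperyApprox n (k + 1))
        = (n - k) ^ 2 / ((n + 1) * (n + k + 2)) *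
            (aperyWeight (n + 1) (k + 1) * (aperyApprox (n + 1) (k + 1) - aperyApprox (n + 1) k))
          + (n - k) ^ 2 * (n + k + 1) / (k + 1) ^ 3 *
            (aperyWeight n k * (aperyApprox (n + 1) k - aperyApprox n k))
          - aperyWeight n (k + 1) * (aperyApprox n (k + 1) - aperyApprox n k) := by
          linear_combination (aperyApprox (n + 1) (k + 1) - aperyApprox (n + 1) k) * hw' +
            (aperyApprox (n + 1) k - aperyApprox n k) * hw
      _ = _ := by
        rw [hright', ih, hright]
        field_simp
        ring

lemma aperyWeight_mul_aperyApprox_succ_succ_sub (n k : ℕ) :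
    aperyWeight (n + 1) (k + 1) * (aperyApprox (n + 1) (k + 1) - aperyApprox n k) =
      (-1) ^ (n + k) * (n + 2 * k + 3) * n.choose k / (k + 1) ^ 3 := by
  have hright := aperyWeight_mul_aperyApprox_succ_right_sub (n + 1) k
  have hleft := aperyWeight_mul_aperyApprox_succ_left_sub n k
  have hw := aperyWeight_succ_succ n k
  rw [cast_choose_succ_succ] at hright
  calc _ = aperyWeight (n + 1) (k + 1) * (aperyApprox (n + 1) (k + 1) - aperyApprox (n + 1) k)
        + (n + 1) * (n + k + 1) * (n + k + 2) / (k + 1) ^ 3 *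
          (aperyWeight n k * (aperyApprox (n + 1) k - aperyApprox n k)) := by
        linear_combination (aperyApprox (n + 1) k - aperyApprox n k) * hw
    _ = _ := by
      rw [hright, hleft]
      field_simp
      ring

/-- The partial sums over `k` of Apéry's operator applied to `C(n,k)² C(n+k,k) (z - c_{n,k})`, as
found by creative telescoping. -/
noncomputable def remainderPrimitive (z : ℝ) (n k : ℕ) : ℝ :=
  aperyCertificate n k * (aperyWeight (n + 1) k * (z - aperyApprox (n + 1) k))
    - 3 * (-1) ^ (n + k) * k * (n + 1).choose k / (n + 1)

lemma aperyOperator_weight_mul_sub_approx_zero (z : ℝ) (n : ℕ) :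
    aperyOperator (fun m => aperyWeight m 0 * (z - aperyApprox m 0)) n =
      remainderPrimitive z n 0 := by
  have h₀ : ((n : ℝ) + 1) ^ 2 * (aperyApprox (n + 1) 0 - aperyApprox n 0) = 2 * (-1) ^ n := by
    have h := aperyWeight_mul_aperyApprox_succ_left_sub n 0
    simp only [aperyWeight, Nat.choose_zero_right, Nat.cast_one, Nat.cast_zero, one_pow, one_mul,
      mul_one, add_zero] at h
    rw [h]
    field_simp
  have h₁ : ((n : ℝ) + 2) ^ 2 * (aperyApprox (n + 2) 0 - aperyApprox (n + 1) 0) =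
      2 * (-1) ^ (n + 1) := by
    have h := aperyWeight_mul_aperyApprox_succ_left_sub (n + 1) 0
    simp only [aperyWeight, Nat.choose_zero_right, Nat.cast_one, Nat.cast_zero, one_pow, one_mul,
      mul_one, add_zero] at h
    rw [h]
    push_cast
    rw [add_assoc (n : ℝ) 1 1, one_add_one_eq_two]
    field_simp
  simp only [aperyOperator, remainderPrimitive, aperyCertificate, aperyWeight,
    Nat.choose_zero_right, Nat.cast_zero, Nat.cast_one]
  linear_combination -h₁ - h₀

lemma aperyOperator_weight_mul_sub_approx_succ (z : ℝ) (n k : ℕ) :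
    aperyOperator (fun m => aperyWeight m (k + 1) * (z - aperyApprox m (k + 1))) n =
      remainderPrimitive z n (k + 1) - remainderPrimitive z n k := by
  have hw₀ := aperyWeight_eq_mul_succ_left n (k + 1)
  have hw₁ := aperyWeight_succ_right (n + 1) k
  have hw₂ := aperyWeight_succ_succ (n + 1) k
  have hc₀ := aperyWeight_mul_aperyApprox_succ_left_sub n (k + 1)
  have hc₁ := aperyWeight_mul_aperyApprox_succ_right_sub (n + 1) k
  have hc₂ := aperyWeight_mul_aperyApprox_succ_succ_sub (n + 1) k
  rw [cast_choose_eq_mul_choose_succ_left n] at hc₀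
  rw [cast_choose_succ_right] at hc₀ hc₁
  push_cast at hw₀ hw₁ hw₂ hc₀ hc₁ hc₂
  -- Every term reduces to `aperyWeight (n + 1) k * (z - aperyApprox (n + 1) k)` and
  -- `(n + 1).choose k`.
  have e₂ : aperyWeight (n + 2) (k + 1) * (z - aperyApprox (n + 2) (k + 1)) =
      (n + 2) * (n + k + 2) * (n + k + 3) / (k + 1) ^ 3 *
          (aperyWeight (n + 1) k * (z - aperyApprox (n + 1) k))
        - (-1) ^ (n + 1 + k) * (n + 2 * k + 4) * (n + 1).choose k / (k + 1) ^ 3 := by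
    linear_combination (z - aperyApprox (n + 1) k) * hw₂ - hc₂
  have e₁ : aperyWeight (n + 1) (k + 1) * (z - aperyApprox (n + 1) (k + 1)) =
      (n + 1 - k) ^ 2 * (n + k + 2) / (k + 1) ^ 3 *
          (aperyWeight (n + 1) k * (z - aperyApprox (n + 1) k))
        - (-1) ^ (n + 1 + k) * ((n + 1 - k) / (k + 1) * (n + 1).choose k) / (k + 1) ^ 2 := by
    linear_combination (z - aperyApprox (n + 1) k) * hw₁ - hc₁
  have e₀ : aperyWeight n (k + 1) * (z - aperyApprox n (k + 1)) =
      (n - k) ^ 2 / ((n + 1) * (n + k + 2)) *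
          (aperyWeight (n + 1) (k + 1) * (z - aperyApprox (n + 1) (k + 1)))
        + aperyWeight n (k + 1) * (aperyApprox (n + 1) (k + 1) - aperyApprox n (k + 1)) := by
    linear_combination (z - aperyApprox (n + 1) (k + 1)) * hw₀
  simp only [aperyOperator, remainderPrimitive, aperyCertificate]
  rw [e₀, e₁, e₂, hc₀, cast_choose_succ_right]
  push_cast
  field_simp
  ring

lemma sum_aperyOperator_weight_mul_sub_approx (z : ℝ) (n N : ℕ) :
    ∑ k ∈ range (N + 1), aperyOperator (fun m => aperyWeight m k * (z - aperyApprox m k)) n =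
      remainderPrimitive z n N := by
  rw [Finset.sum_range_succ', aperyOperator_weight_mul_sub_approx_zero]
  simp only [aperyOperator_weight_mul_sub_approx_succ]
  rw [Finset.sum_range_sub, sub_add_cancel]

lemma aperyB2_mul_sub_aperyA2_eq_sum {n N : ℕ} (h : n < N) (z : ℝ) :
    aperyB2 n * z - aperyA2 n = ∑ k ∈ range N, aperyWeight n k * (z - aperyApprox n k) := by
  calc aperyB2 n * z - aperyA2 n
      = ∑ k ∈ range (n + 1), aperyWeight n k * (z - aperyApprox n k) := by
        simp only [mul_sub, Finset.sum_sub_distrib, ← Finset.sum_mul]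
        rfl
    _ = _ := by
        refine Finset.sum_subset (range_subset_range.2 h) fun k _ hk => ?_
        rw [aperyWeight_eq_zero_of_lt (by simpa using hk), zero_mul]

theorem aperyOperator_aperyB2_mul_sub_aperyA2 (z : ℝ) (n : ℕ) :
    aperyOperator (fun m => aperyB2 m * z - aperyA2 m) n = 0 := by
  calc aperyOperator (fun m => aperyB2 m * z - aperyA2 m) n
      = aperyOperator
          (fun m => ∑ k ∈ range (n + 3), aperyWeight m k * (z - aperyApprox m k)) n := by
        simp only [aperyOperator]
        rw [aperyB2_mul_sub_aperyA2_eq_sum (Nat.lt_succ_self (n + 2)),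
          aperyB2_mul_sub_aperyA2_eq_sum (show n + 1 < n + 3 by lia),
          aperyB2_mul_sub_aperyA2_eq_sum (show n < n + 3 by lia)]
    _ = remainderPrimitive z n (n + 2) := by
        rw [aperyOperator_sum, sum_aperyOperator_weight_mul_sub_approx]
    _ = 0 := by
        simp [remainderPrimitive, aperyWeight_eq_zero_of_lt]

/-! ### The series for the remainders -/

/-- The `t`-th term `C(t,n) (n! t! / (n+t+1)!)²` of the series expressing `±(Bₙ ζ(2) - Aₙ)`. -/
noncomputable def seriesTerm (n t : ℕ) : ℝ :=
  t.choose n * ((n.factorial : ℝ) * t.factorial / (n + t + 1).factorial) ^ 2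

lemma seriesTerm_nonneg (n t : ℕ) : 0 ≤ seriesTerm n t := by
  unfold seriesTerm
  positivity

lemma seriesTerm_zero_left (t : ℕ) : seriesTerm 0 t = 1 / ((t : ℝ) + 1) ^ 2 := by
  have ht : (t.factorial : ℝ) ≠ 0 := mod_cast t.factorial_ne_zero
  simp only [seriesTerm, Nat.choose_zero_right, Nat.factorial_zero, zero_add, Nat.factorial_succ]
  push_cast
  field_simp

lemma seriesTerm_succ_left (n t : ℕ) :
    seriesTerm (n + 1) t = (n + 1) * (t - n) / (n + t + 2) ^ 2 * seriesTerm n t := by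
  have h : ((n + t + 1).factorial : ℝ) ≠ 0 := mod_cast (n + t + 1).factorial_ne_zero
  rw [seriesTerm, seriesTerm, cast_choose_succ_right, add_right_comm n 1 t,
    Nat.factorial_succ n, Nat.factorial_succ (n + t + 1)]
  push_cast
  field_simp
  ring

lemma seriesTerm_succ_succ (n t : ℕ) :
    seriesTerm (n + 1) (t + 1) =
      (n + 1) * (t + 1) ^ 3 / ((n + t + 2) ^ 2 * (n + t + 3) ^ 2) * seriesTerm n t := by
  have h : ((n + t + 1).factorial : ℝ) ≠ 0 := mod_cast (n + t + 1).factorial_ne_zero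
  rw [seriesTerm, seriesTerm, cast_choose_succ_succ,
    show n + 1 + (t + 1) + 1 = n + t + 1 + 1 + 1 by ring, Nat.factorial_succ n,
    Nat.factorial_succ t, Nat.factorial_succ (n + t + 1 + 1), Nat.factorial_succ (n + t + 1)]
  push_cast
  field_simp
  ring

lemma seriesTerm_succ_left_le (n t : ℕ) : seriesTerm (n + 1) t ≤ 1 / 4 * seriesTerm n t := by
  rw [seriesTerm_succ_left]
  refine mul_le_mul_of_nonneg_right ?_ (seriesTerm_nonneg n t)
  have amgm : 4 * (((n : ℝ) + 1) * (t - n)) ≤ (t + 1) ^ 2 := by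
    linarith [four_mul_le_sq_add ((n : ℝ) + 1) (t - n)]
  rw [div_le_iff₀ (by positivity)]
  nlinarith [(n.cast_nonneg : (0 : ℝ) ≤ n), (t.cast_nonneg : (0 : ℝ) ≤ t)]

lemma seriesTerm_add_le (n m t : ℕ) : seriesTerm (n + m) t ≤ (1 / 4) ^ m * seriesTerm n t := by
  induction m with
  | zero => simp
  | succ m ih =>
    calc seriesTerm (n + m + 1) t ≤ 1 / 4 * seriesTerm (n + m) t := seriesTerm_succ_left_le _ t
      _ ≤ 1 / 4 * ((1 / 4) ^ m * seriesTerm n t) := by gcongr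
      _ = (1 / 4) ^ (m + 1) * seriesTerm n t := by ring

lemma hasSum_one_div_add_one_sq : HasSum (fun t : ℕ => 1 / ((t : ℝ) + 1) ^ 2) (π ^ 2 / 6) := by
  simpa using (hasSum_nat_add_iff' 1).2 hasSum_zeta_two

lemma summable_uncurry_seriesTerm : Summable (Function.uncurry seriesTerm) := by
  have hgeom : Summable fun n : ℕ => (1 / 4 : ℝ) ^ n :=
    summable_geometric_of_lt_one (by norm_num) (by norm_num)
  refine (hgeom.mul_of_nonneg hasSum_one_div_add_one_sq.summable (fun n => by positivity)
    fun t => by positivity).of_nonneg_of_le (fun p => seriesTerm_nonneg p.1 p.2) fun p => ?_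
  simpa [seriesTerm_zero_left, Function.uncurry] using seriesTerm_add_le 0 p.1 p.2

lemma summable_seriesTerm (n : ℕ) : Summable (seriesTerm n) :=
  summable_uncurry_seriesTerm.prod_factor n

lemma tendsto_sq_mul_seriesTerm_succ (n : ℕ) :
    Tendsto (fun t : ℕ => ((t : ℝ) + 1) ^ 2 * seriesTerm (n + 1) t) atTop (𝓝 0) := by
  refine squeeze_zero (fun t => mul_nonneg (sq_nonneg _) (seriesTerm_nonneg _ t)) (fun t => ?_)
    (tendsto_one_div_add_atTop_nhds_zero_nat (𝕜 := ℝ))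
  have hle : seriesTerm (n + 1) t ≤ seriesTerm 1 t := by
    rw [add_comm]
    exact (seriesTerm_add_le 1 n t).trans <| mul_le_of_le_one_left (seriesTerm_nonneg 1 t)
      (pow_le_one₀ (by norm_num) (by norm_num))
  calc ((t : ℝ) + 1) ^ 2 * seriesTerm (n + 1) t
      ≤ ((t : ℝ) + 1) ^ 2 * seriesTerm 1 t := by gcongr
    _ = (t : ℝ) / ((t : ℝ) + 2) ^ 2 := by
      rw [seriesTerm_succ_left, seriesTerm_zero_left]
      push_cast
      field_simp
      ring
    _ ≤ 1 / ((t : ℝ) + 1) := by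
      rw [div_le_div_iff₀ (by positivity) (by positivity)]
      nlinarith [(t.cast_nonneg : (0 : ℝ) ≤ t)]

lemma tsum_eq_sub_of_tendsto {G : Type*} [AddCommGroup G] [TopologicalSpace G]
    [IsTopologicalAddGroup G] [T2Space G] {f g : ℕ → G} {l : G} (hf : Summable f)
    (hfg : ∀ n, f n = g (n + 1) - g n) (hg : Tendsto g atTop (𝓝 l)) : ∑' n, f n = l - g 0 := by
  refine tendsto_nhds_unique hf.hasSum.tendsto_sum_nat ?_
  simpa only [hfg, Finset.sum_range_sub] using hg.sub_const (g 0)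

lemma tendsto_aperyCertificate_neg_div_sq (a : ℝ) :
    Tendsto (fun t : ℕ => aperyCertificate a (-(t + 1)) / ((t : ℝ) + 1) ^ 2) atTop (𝓝 1) := by
  have h : Tendsto (fun t : ℕ => 1 / ((t : ℝ) + 1)) atTop (𝓝 0) :=
    tendsto_one_div_add_atTop_nhds_zero_nat
  have hlim : Tendsto (fun t : ℕ => 1 - 3 * (2 * a + 3) * (1 / ((t : ℝ) + 1)) -
      (11 * (a + 1) ^ 2 + 9 * (a + 1) + 2) * (1 / ((t : ℝ) + 1)) ^ 2) atTop (𝓝 1) := by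
    simpa using ((h.const_mul (3 * (2 * a + 3))).const_sub 1).sub
      ((h.pow 2).const_mul (11 * (a + 1) ^ 2 + 9 * (a + 1) + 2))
  refine hlim.congr fun t => ?_
  rw [aperyCertificate]
  field_simp
  ring

lemma tsum_seriesTerm_zero : ∑' t, seriesTerm 0 t = π ^ 2 / 6 := by
  simp only [seriesTerm_zero_left, hasSum_one_div_add_one_sq.tsum_eq]

-- The telescoping behind Apéry's recurrence, continued to the index `n = -1`.
lemma seriesTerm_one_add_three_mul_seriesTerm_zero (t : ℕ) :
    seriesTerm 1 t + 3 * seriesTerm 0 t =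
      aperyCertificate (-1) (-((t + 1 : ℕ) + 1)) / (((t + 1 : ℕ) : ℝ) + 1) ^ 2
        - aperyCertificate (-1) (-(t + 1)) / ((t : ℝ) + 1) ^ 2 := by
  simp only [aperyCertificate]
  rw [seriesTerm_succ_left, seriesTerm_zero_left]
  push_cast
  rw [add_assoc (t : ℝ) 1 1, one_add_one_eq_two, zero_add, zero_add]
  field_simp
  ring

lemma tsum_seriesTerm_one : ∑' t, seriesTerm 1 t = 5 - 3 * (π ^ 2 / 6) := by
  have hsum := (summable_seriesTerm 0).mul_left 3
  have h := tsum_eq_sub_of_tendsto ((summable_seriesTerm 1).add hsum)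
    seriesTerm_one_add_three_mul_seriesTerm_zero (tendsto_aperyCertificate_neg_div_sq (-1))
  rw [(summable_seriesTerm 1).tsum_add hsum, tsum_mul_left, tsum_seriesTerm_zero] at h
  norm_num [aperyCertificate] at h
  linarith

lemma aperyOperator_neg_one_pow_mul_seriesTerm (n t : ℕ) :
    aperyOperator (fun m => (-1) ^ m * seriesTerm m t) n =
      (-1) ^ n * (aperyCertificate n (-((t + 1 : ℕ) + 1)) * seriesTerm (n + 1) (t + 1))
        - (-1) ^ n * (aperyCertificate n (-(t + 1)) * seriesTerm (n + 1) t) := by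
  simp only [aperyOperator, aperyCertificate]
  rw [seriesTerm_succ_left (n + 1), seriesTerm_succ_succ, seriesTerm_succ_left n]
  push_cast
  field_simp
  ring

theorem aperyOperator_neg_one_pow_mul_tsum_seriesTerm (n : ℕ) :
    aperyOperator (fun m => (-1) ^ m * ∑' t, seriesTerm m t) n = 0 := by
  have hlim : Tendsto (fun t : ℕ => (-1) ^ n * (aperyCertificate n (-(t + 1)) *
      seriesTerm (n + 1) t)) atTop (𝓝 0) := by
    have h := ((tendsto_aperyCertificate_neg_div_sq n).mul
      (tendsto_sq_mul_seriesTerm_succ n)).const_mul ((-1 : ℝ) ^ n)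
    rw [mul_zero, mul_zero] at h
    refine h.congr fun t => ?_
    field_simp
  have hsum := hasSum_aperyOperator (f := fun m t => (-1) ^ m * seriesTerm m t)
    (fun m => (summable_seriesTerm m).mul_left _) n
  simp only [tsum_mul_left] at hsum
  rw [← hsum.tsum_eq, tsum_eq_sub_of_tendsto hsum.summable
    (aperyOperator_neg_one_pow_mul_seriesTerm n) hlim]
  have h₀ : seriesTerm (n + 1) 0 = 0 := by simp [seriesTerm]
  rw [h₀, mul_zero, mul_zero, sub_zero]

theorem aperyB2_mul_zeta_two_sub_aperyA2 (n : ℕ) :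
    aperyB2 n * (π ^ 2 / 6) - aperyA2 n = (-1) ^ n * ∑' t, seriesTerm n t := by
  refine congrFun (eq_of_aperyOperator_eq_zero
    (aperyOperator_aperyB2_mul_sub_aperyA2 (π ^ 2 / 6))
    aperyOperator_neg_one_pow_mul_tsum_seriesTerm ?_ ?_) n
  · simp [aperyB2, aperyA2, tsum_seriesTerm_zero]
  · simp [aperyB2, aperyA2, tsum_seriesTerm_one, Finset.sum_range_succ]
    ring

/-! ### Integrals over the unit square -/

lemma integral_pow_mul_one_sub_pow (m n : ℕ) :
    ∫ x in (0 : ℝ)..1, x ^ m * (1 - x) ^ n =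
      (m.factorial : ℝ) * n.factorial / (m + n + 1).factorial := by
  have h := Complex.Gamma_mul_Gamma_eq_betaIntegral (s := m + 1) (t := n + 1)
    (by simpa using m.cast_add_one_pos) (by simpa using n.cast_add_one_pos)
  have hbeta : Complex.betaIntegral (m + 1) (n + 1) =
      ((∫ x in (0 : ℝ)..1, x ^ m * (1 - x) ^ n : ℝ) : ℂ) := by
    simp [Complex.betaIntegral, ← intervalIntegral.integral_ofReal]
  rw [hbeta, show (m + 1 + (n + 1) : ℂ) = (m + n + 1 : ℕ) + 1 by push_cast; ring,
    Complex.Gamma_nat_eq_factorial, Complex.Gamma_nat_eq_factorial,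
    Complex.Gamma_nat_eq_factorial] at h
  rw [eq_div_iff (mod_cast (m + n + 1).factorial_ne_zero), mul_comm]
  exact_mod_cast h.symm

lemma integral_integral_sum_mul {ι 𝕜 : Type*} [RCLike 𝕜] {s : Finset ι}
    {f g : ι → ℝ → 𝕜} {a b c d : ℝ}
    (hf : ∀ i ∈ s, IntervalIntegrable (f i) MeasureTheory.volume a b)
    (hg : ∀ i ∈ s, IntervalIntegrable (g i) MeasureTheory.volume c d) :
    ∫ y in c..d, ∫ x in a..b, ∑ i ∈ s, f i x * g i y =
      ∑ i ∈ s, (∫ x in a..b, f i x) * ∫ y in c..d, g i y := by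
  have inner (y : ℝ) : ∫ x in a..b, ∑ i ∈ s, f i x * g i y =
      ∑ i ∈ s, (∫ x in a..b, f i x) * g i y := by
    rw [intervalIntegral.integral_finsetSum fun i hi => (hf i hi).mul_const _]
    simp only [intervalIntegral.integral_mul_const]
  simp only [inner]
  rw [intervalIntegral.integral_finsetSum fun i hi => (hg i hi).const_mul _]
  simp only [intervalIntegral.integral_const_mul]

lemma integral_polynomial_eval {p : ℝ[X]} {N : ℕ} (hp : p.natDegree < N) (a b : ℝ) :
    ∫ x in a..b, p.eval x =
      ∑ μ ∈ range N, p.coeff μ * ((b ^ (μ + 1) - a ^ (μ + 1)) / ((μ : ℝ) + 1)) := by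
  simp only [eval_eq_sum_range' hp]
  rw [intervalIntegral.integral_finsetSum fun μ _ =>
    (by fun_prop : Continuous fun x : ℝ => p.coeff μ * x ^ μ).intervalIntegrable a b]
  simp only [intervalIntegral.integral_const_mul, integral_pow]

lemma tsum_neg_one_pow_mul_seriesTerm_eq_integral (t : ℕ) :
    ∑' n, (-1) ^ n * seriesTerm n t =
      ∫ y in (0 : ℝ)..1, ∫ x in (0 : ℝ)..1, (x * y * (x + y - x * y)) ^ t := by
  have expand (x y : ℝ) : (x * y * (x + y - x * y)) ^ t = ∑ n ∈ range (t + 1),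
      ((-1) ^ n * t.choose n * (x ^ t * (1 - x) ^ n)) * (y ^ t * (1 - y) ^ n) := by
    rw [mul_pow, show x + y - x * y = -((1 - x) * (1 - y)) + 1 by ring, add_pow, Finset.mul_sum]
    refine Finset.sum_congr rfl fun n _ => ?_
    rw [neg_pow, mul_pow (1 - x)]
    ring
  simp only [expand]
  rw [tsum_eq_sum (s := range (t + 1)) fun n hn => by
      simp [seriesTerm, Nat.choose_eq_zero_of_lt (by simpa using hn : t < n)],
    integral_integral_sum_mul (fun n _ => (by fun_prop : Continuous _).intervalIntegrable 0 1)
      (fun n _ => (by fun_prop : Continuous _).intervalIntegrable 0 1)]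
  refine Finset.sum_congr rfl fun n _ => ?_
  rw [intervalIntegral.integral_const_mul, integral_pow_mul_one_sub_pow, seriesTerm, add_comm t n]
  ring

/-- The contribution of the `j`-th term of the binomial expansion of `(y + x(1-y))^t` to the
integral of `(xy(x+y-xy))^t` over the unit square, after integration with respect to `x`. -/
noncomputable def integralTerm (t j : ℕ) : ℝ :=
  t.choose j / ((t : ℝ) + j + 1) * ∫ y in (0 : ℝ)..1, (y ^ 2) ^ (t - j) * (y * (1 - y)) ^ j

lemma integralTerm_nonneg (t j : ℕ) : 0 ≤ integralTerm t j := by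
  refine mul_nonneg (by positivity) (intervalIntegral.integral_nonneg zero_le_one fun y hy => ?_)
  have := sub_nonneg.2 hy.2
  have := hy.1
  positivity

lemma integralTerm_eq_zero_of_lt {t j : ℕ} (h : t < j) : integralTerm t j = 0 := by
  simp [integralTerm, Nat.choose_eq_zero_of_lt h]

lemma tsum_integralTerm_eq_integral (t : ℕ) :
    ∑' j, integralTerm t j =
      ∫ y in (0 : ℝ)..1, ∫ x in (0 : ℝ)..1, (x * y * (x + y - x * y)) ^ t := by
  have expand (x y : ℝ) : (x * y * (x + y - x * y)) ^ t = ∑ j ∈ range (t + 1),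
      x ^ (t + j) * (t.choose j * ((y ^ 2) ^ (t - j) * (y * (1 - y)) ^ j)) := by
    rw [mul_pow, show x + y - x * y = x * (1 - y) + y by ring, add_pow, Finset.mul_sum]
    refine Finset.sum_congr rfl fun j hj => ?_
    obtain ⟨i, rfl⟩ := Nat.exists_eq_add_of_le (mem_range_succ_iff.1 hj)
    rw [Nat.add_sub_cancel_left, mul_pow x (1 - y), mul_pow y (1 - y)]
    ring
  simp only [expand]
  rw [tsum_eq_sum (s := range (t + 1)) fun j hj =>
      integralTerm_eq_zero_of_lt (by simpa using hj),
    integral_integral_sum_mul (fun n _ => (by fun_prop : Continuous _).intervalIntegrable 0 1)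
      (fun n _ => (by fun_prop : Continuous _).intervalIntegrable 0 1)]
  refine Finset.sum_congr rfl fun j _ => ?_
  rw [intervalIntegral.integral_const_mul, integral_pow, integralTerm]
  rw [one_pow, zero_pow (t + j).succ_ne_zero, Nat.cast_add]
  ring

/-! ### Summation along antidiagonals -/

lemma hasSum_sum_antidiagonal {A α : Type*} [AddMonoid A] [HasAntidiagonal A] [AddCommMonoid α]
    [TopologicalSpace α] [ContinuousAdd α] [RegularSpace α] {f : A × A → α} {a : α}
    (hf : HasSum f a) : HasSum (fun n => ∑ p ∈ antidiagonal n, f p) a :=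
  (HasAntidiagonal.sigmaAntidiagonalEquivProd.hasSum_iff.2 hf).sigma fun n : A =>
    (antidiagonal n).hasSum f

lemma eq_sum_antidiagonal_choose_mul_of_recurrence {R : Type*} [CommSemiring R] {a b : R}
    {u : ℕ → R} (h₀ : u 0 = 1) (h₁ : u 1 = a) (h : ∀ n, u (n + 2) = a * u (n + 1) + b * u n)
    (n : ℕ) :
    u n = ∑ p ∈ antidiagonal n, p.1.choose p.2 * (a ^ (p.1 - p.2) * b ^ p.2) := by
  induction n using Nat.twoStepInduction with
  | zero => simp [h₀]
  | one => simp [h₁, Finset.Nat.antidiagonal_succ]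
  | more n ih₀ ih₁ =>
    have absorb (i j : ℕ) : (i.choose (j + 1) : R) * (a ^ (i - j) * b ^ (j + 1)) =
        a * (i.choose (j + 1) * (a ^ (i - (j + 1)) * b ^ (j + 1))) := by
      rcases lt_or_ge j i with hij | hij
      · rw [show i - j = i - (j + 1) + 1 by lia]
        ring
      · simp [Nat.choose_eq_zero_of_lt (Nat.lt_succ_of_le hij)]
    have shift (i j : ℕ) : (i.choose j : R) * (a ^ (i - j) * b ^ (j + 1)) =
        b * (i.choose j * (a ^ (i - j) * b ^ j)) := by ring
    rw [h, ih₀, ih₁, Finset.Nat.antidiagonal_succ_succ', Finset.Nat.antidiagonal_succ']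
    simp only [Finset.sum_cons, Finset.sum_map, Function.Embedding.coe_prodMap, Prod.map_fst,
      Prod.map_snd, Function.Embedding.coeFn_mk, Function.Embedding.refl_apply,
      Nat.succ_eq_add_one, Nat.choose_succ_succ, Nat.choose_zero_succ, Nat.choose_zero_right,
      Nat.cast_add, Nat.cast_zero, Nat.cast_one, Nat.add_sub_add_right, Nat.sub_zero, add_mul,
      zero_mul, Finset.sum_add_distrib, shift, absorb, ← Finset.mul_sum]
    ring

lemma pzeta_succ_eq_sum_antidiagonal (n : ℕ) :
    pzeta (n + 1) = ∑ p ∈ antidiagonal (n + 1),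
      (p.1.choose p.2 : ℝ[X]) * ((X ^ 2) ^ (p.1 - p.2) * (X * (1 - X)) ^ p.2) := by
  have h := eq_sum_antidiagonal_choose_mul_of_recurrence (a := (X : ℝ[X]) ^ 2) (b := X * (1 - X))
    (u := fun | 0 => 1 | n + 1 => pzeta (n + 1)) rfl rfl (fun n => ?_) (n + 1)
  · exact h
  · cases n with
    | zero => simp only [pzeta]; ring
    | succ n => rfl

lemma natDegree_pzeta_le (n : ℕ) : (pzeta n).natDegree ≤ 2 * n := by
  induction n using pzeta.induct with
  | case1 => simp [pzeta]
  | case2 => simp [pzeta]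
  | case3 => unfold pzeta; compute_degree
  | case4 n ih₂ ih₁ =>
    rw [pzeta]
    compute_degree
    all_goals lia

lemma sum_antidiagonal_integralTerm (n : ℕ) :
    ∑ p ∈ antidiagonal (n + 1), integralTerm p.1 p.2 =
      ∑ μ ∈ range (2 * (n + 1) + 1), azeta (n + 1) μ / (((n : ℝ) + 2) * ((μ : ℝ) + 1)) := by
  have heval (y : ℝ) : (pzeta (n + 1)).eval y = ∑ p ∈ antidiagonal (n + 1),
      (p.1.choose p.2 : ℝ) * ((y ^ 2) ^ (p.1 - p.2) * (y * (1 - y)) ^ p.2) := by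
    rw [pzeta_succ_eq_sum_antidiagonal, eval_finsetSum]
    simp
  calc ∑ p ∈ antidiagonal (n + 1), integralTerm p.1 p.2
      = (∫ y in (0 : ℝ)..1, (pzeta (n + 1)).eval y) / ((n : ℝ) + 2) := by
        simp only [heval]
        rw [intervalIntegral.integral_finsetSum fun p _ =>
          (by fun_prop : Continuous _).intervalIntegrable 0 1, Finset.sum_div]
        refine Finset.sum_congr rfl fun p hp => ?_
        have hp : (p.1 : ℝ) + p.2 = n + 1 := mod_cast mem_antidiagonal.1 hp
        rw [intervalIntegral.integral_const_mul, integralTerm, hp]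
        ring
    _ = _ := by
        rw [integral_polynomial_eval (Nat.lt_succ_of_le (natDegree_pzeta_le (n + 1))),
          Finset.sum_div]
        refine Finset.sum_congr rfl fun μ _ => ?_
        rw [azeta, one_pow, zero_pow μ.succ_ne_zero, sub_zero, mul_one_div, div_div, mul_comm]

lemma summable_neg_one_pow_mul_seriesTerm :
    Summable fun p : ℕ × ℕ => (-1) ^ p.2 * seriesTerm p.2 p.1 := by
  refine summable_uncurry_seriesTerm.prod_symm.of_norm_bounded fun p => ?_
  simp [Function.uncurry, abs_of_nonneg (seriesTerm_nonneg _ _)]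

lemma summable_integralTerm : Summable fun p : ℕ × ℕ => integralTerm p.1 p.2 := by
  refine (summable_prod_of_nonneg fun p => integralTerm_nonneg p.1 p.2).2 ⟨fun t => ?_, ?_⟩
  · exact summable_of_ne_finset_zero (s := range (t + 1)) fun j hj =>
      integralTerm_eq_zero_of_lt (by simpa using hj)
  · simp only [tsum_integralTerm_eq_integral, ← tsum_neg_one_pow_mul_seriesTerm_eq_integral]
    exact summable_neg_one_pow_mul_seriesTerm.prod

/-- **The signed error sum of Apéry's continued fraction for `ζ(2)` via the
coefficients `a_{ν,μ}`.**
`∑ₙ (Bₙ ζ(2) − Aₙ) = 1 + ∑_{ν=1}^∞ ∑_{μ=0}^{2ν} a_{ν,μ}/((ν+1)(μ+1))`,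
where `ζ(2) = π²/6`. -/
theorem error_sum_apery_zeta_two_coeff :
    ∑' n : ℕ, (aperyB2 n * (π ^ 2 / 6) - aperyA2 n)
      = 1 + ∑' ν : ℕ, ∑ μ ∈ range (2 * (ν + 1) + 1),
          azeta (ν + 1) μ / (((ν : ℝ) + 2) * ((μ : ℝ) + 1)) := by
  have hdiag := hasSum_sum_antidiagonal summable_integralTerm.hasSum
  calc ∑' n, (aperyB2 n * (π ^ 2 / 6) - aperyA2 n)
      = ∑' n, ∑' t, (-1) ^ n * seriesTerm n t := by
        simp only [aperyB2_mul_zeta_two_sub_aperyA2, tsum_mul_left]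
    _ = ∑' t, ∑' n, (-1) ^ n * seriesTerm n t :=
        summable_neg_one_pow_mul_seriesTerm.tsum_comm
    _ = ∑' t, ∑' j, integralTerm t j := by
        simp only [tsum_neg_one_pow_mul_seriesTerm_eq_integral,
          tsum_integralTerm_eq_integral]
    _ = ∑' n, ∑ p ∈ antidiagonal n, integralTerm p.1 p.2 := by
        rw [hdiag.tsum_eq, summable_integralTerm.tsum_prod]
    _ = integralTerm 0 0 + ∑' n, ∑ p ∈ antidiagonal (n + 1), integralTerm p.1 p.2 := by
        rw [hdiag.summable.tsum_eq_zero_add, Nat.antidiagonal_zero, sum_singleton]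
    _ = _ := by
        simp only [sum_antidiagonal_integralTerm]
        simp [integralTerm]
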